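/- arXiv:2510.25490 — 7 statements merged into one kernel-verified Lean document; each statement's English description precedes it below -/
import Mathlib

section
/- Let T be a positive integer, v : {1,…,T} → ℝ nondecreasing, a : {1,…,T} → ℝ with a_h ≥ 0 for all h, and suppose Σ_{h=1}^{T} a_h ≥ 1. Let t̄ be the least index t with Σ_{h=1}^{t} a_h ≥ 1, and for each t define S_t = v_t·(1 − Σ_{h=1}^{t−1} a_h) + Σ_{h=1}^{t−1} v_h·a_h. Then for every t with 1 ≤ t ≤ t̄ one has S_t ≤ S_{t̄}. -/
/-!
The increment of the right-hand side factors as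
`S (t + 1) - S t = (v (t + 1) - v t) * (1 - ∑_{h ≤ t} a h)`. Both factors are nonnegative as long
as the activation accumulated through `t` has not exceeded `1`, so `S` increases up to the critical
index.
-/

section SupermodularRHS

variable {R : Type*} [Ring R]

/-- The right-hand side `S_t` of the `t`-th supermodular constraint, for routing values `v` and
activation levels `a`. Both sequences are indexed from `1`: their values at `0` do not enter `S_t`
for `t ≥ 1`, and `t = 0` is a junk case. -/
def supermodularRHS (v a : ℕ → R) (t : ℕ) : R :=
  v t * (1 - ∑ h ∈ Finset.Icc 1 (t - 1), a h) + ∑ h ∈ Finset.Icc 1 (t - 1), v h * a h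

theorem supermodularRHS_add_one_sub (v a : ℕ → R) {t : ℕ} (ht : 1 ≤ t) :
    supermodularRHS v a (t + 1) - supermodularRHS v a t =
      (v (t + 1) - v t) * (1 - ∑ h ∈ Finset.Icc 1 t, a h) := by
  obtain ⟨s, rfl⟩ := Nat.exists_eq_add_of_le' ht
  simp only [supermodularRHS, add_tsub_cancel_right, Finset.sum_Icc_succ_top ht]
  noncomm_ring

variable [PartialOrder R] [IsOrderedRing R]

theorem supermodularRHS_le_add_one {v a : ℕ → R} {t : ℕ} (ht : 1 ≤ t) (hv : v t ≤ v (t + 1))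
    (ha : ∑ h ∈ Finset.Icc 1 t, a h ≤ 1) :
    supermodularRHS v a t ≤ supermodularRHS v a (t + 1) := by
  rw [← sub_nonneg, supermodularRHS_add_one_sub v a ht]
  exact mul_nonneg (sub_nonneg.2 hv) (sub_nonneg.2 ha)

theorem stmt_3_general {v a : ℕ → R} {n : ℕ} (hv : MonotoneOn v (Set.Icc 1 n))
    (ha : ∀ t ∈ Set.Ico 1 n, ∑ h ∈ Finset.Icc 1 t, a h ≤ 1) :
    MonotoneOn (supermodularRHS v a) (Set.Icc 1 n) :=
  monotoneOn_of_le_add_one Set.ordConnected_Icc fun t _ ht ht' =>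
    supermodularRHS_le_add_one ht.1 (hv ht ht' t.le_succ) (ha t ⟨ht.1, ht'.2⟩)

end SupermodularRHS

/-- for a nondecreasing sequence `v` on `{1, …, T}` and nonnegative
activation levels `a` with total at least `1`, letting `tb` be the least index whose
cumulative activation reaches `1` and `S t` the `t`-th supermodular right-hand side,
one has `S t ≤ S tb` for every `t ≤ tb`. -/
theorem stmt_3 (T : ℕ) (hT : 1 ≤ T) (v a : ℕ → ℝ)
    (hmono : ∀ h₁ ∈ Finset.Icc 1 T, ∀ h₂ ∈ Finset.Icc 1 T, h₁ ≤ h₂ → v h₁ ≤ v h₂)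
    (ha : ∀ h ∈ Finset.Icc 1 T, 0 ≤ a h)
    (hsum : 1 ≤ ∑ h ∈ Finset.Icc 1 T, a h)
    (tb : ℕ) (htb1 : 1 ≤ tb) (htbT : tb ≤ T)
    (htbge : 1 ≤ ∑ h ∈ Finset.Icc 1 tb, a h)
    (htbmin : ∀ t, 1 ≤ t → t < tb → ∑ h ∈ Finset.Icc 1 t, a h < 1)
    (S : ℕ → ℝ)
    (hS : ∀ t, S t = v t * (1 - ∑ h ∈ Finset.Icc 1 (t - 1), a h) +
      ∑ h ∈ Finset.Icc 1 (t - 1), v h * a h)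
    (t : ℕ) (ht1 : 1 ≤ t) (httb : t ≤ tb) :
    S t ≤ S tb := by
  have hv : MonotoneOn v (Set.Icc 1 tb) := fun i hi j hj =>
    hmono i (Finset.mem_Icc.2 ⟨hi.1, hi.2.trans htbT⟩) j (Finset.mem_Icc.2 ⟨hj.1, hj.2.trans htbT⟩)
  obtain rfl : S = supermodularRHS v a := funext hS
  exact stmt_3_general hv (fun s hs => (htbmin s hs.1 hs.2).le) ⟨ht1, httb⟩ ⟨htb1, le_rfl⟩ httb
end

section
/- Let T be a positive integer, v : {1,…,T} → ℝ nondecreasing, and a : {1,…,T} → {0,1} binary with Σ_{h=1}^{T} a_h ≥ 1. Let t̄ be the least index t with a_t = 1 (equivalently, the least t with Σ_{h=1}^{t} a_h ≥ 1), and for each t define S_t = v_t·(1 − Σ_{h=1}^{t−1} a_h) + Σ_{h=1}^{t−1} v_h·a_h. Then Σ_{h=1}^{t̄−1} a_h = 0 and the least real number η satisfying η ≥ S_t for all t equals v_{t̄}; that is, for binary activation values the optimal routing cost of the commodity in FZ-S equals the smallest sorted routing value whose associated variable is activated. -/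
/-!
Since `v t * (1 - ∑ a h) + ∑ v h * a h = v t - ∑ (v t - v h) * a h`, each supermodular bound is
`v t` minus the nonnegative savings of the options activated before `t`. Up to the first activated
index `b` the bound is thus at most `v t ≤ v b`, with equality at `b`, where no earlier option is
active; beyond `b` the savings `v t - v b` from `b` alone bring it down to `v b`.
-/

theorem filter_lt_Icc_one {n t : ℕ} (ht : t ≤ n + 1) :
    {h ∈ Finset.Icc 1 n | h < t} = Finset.Icc 1 (t - 1) := by
  ext h
  simp only [Finset.mem_filter, Finset.mem_Icc]
  lia

section SupermodularBound

variable {ι R : Type*} [LinearOrder ι] [Ring R]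

/-- The right-hand side at `t` of the supermodular constraint of formulation FZ-S, for routing
values `v` and activation levels `a`. The sorted positions form a finite set `J` in a linear order,
and the sums run over the positions of `J` strictly before `t`. -/
def supermodularBound (J : Finset ι) (v a : ι → R) (t : ι) : R :=
  v t * (1 - ∑ h ∈ J with h < t, a h) + ∑ h ∈ J with h < t, v h * a h

theorem supermodularBound_eq_sub_sum (J : Finset ι) (v a : ι → R) (t : ι) :
    supermodularBound J v a t = v t - ∑ h ∈ J with h < t, (v t - v h) * a h := by
  simp only [supermodularBound, sub_mul, Finset.sum_sub_distrib, ← Finset.mul_sum]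
  noncomm_ring

variable {J : Finset ι} {v a : ι → R} {b t : ι}

theorem supermodularBound_eq_self_of_forall_lt_eq_zero (ha : ∀ h ∈ J, h < t → a h = 0) :
    supermodularBound J v a t = v t := by
  rw [supermodularBound_eq_sub_sum, Finset.sum_eq_zero, sub_zero]
  intro h hh
  obtain ⟨hJ, hlt⟩ := Finset.mem_filter.mp hh
  rw [ha h hJ hlt, mul_zero]

variable [PartialOrder R] [IsOrderedRing R]

theorem sub_mul_nonneg_of_monotoneOn (hv : MonotoneOn v J) (ha : ∀ h ∈ J, 0 ≤ a h)
    (ht : t ∈ J) : ∀ h ∈ J.filter (· < t), 0 ≤ (v t - v h) * a h := by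
  intro h hh
  obtain ⟨hJ, hlt⟩ := Finset.mem_filter.mp hh
  exact mul_nonneg (sub_nonneg.mpr (hv hJ ht hlt.le)) (ha h hJ)

theorem supermodularBound_le_self (hv : MonotoneOn v J) (ha : ∀ h ∈ J, 0 ≤ a h) (ht : t ∈ J) :
    supermodularBound J v a t ≤ v t := by
  rw [supermodularBound_eq_sub_sum]
  exact sub_le_self _ (Finset.sum_nonneg (sub_mul_nonneg_of_monotoneOn hv ha ht))

theorem supermodularBound_le_of_lt (hv : MonotoneOn v J) (ha : ∀ h ∈ J, 0 ≤ a h) (ht : t ∈ J)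
    (hb : b ∈ J) (hbt : b < t) (hab : 1 ≤ a b) : supermodularBound J v a t ≤ v b := by
  have savings_ge : v t - v b ≤ ∑ h ∈ J with h < t, (v t - v h) * a h :=
    calc
      v t - v b ≤ (v t - v b) * a b :=
        le_mul_of_one_le_right (sub_nonneg.mpr (hv hb ht hbt.le)) hab
      _ ≤ ∑ h ∈ J with h < t, (v t - v h) * a h :=
        Finset.single_le_sum (f := fun h ↦ (v t - v h) * a h)
          (sub_mul_nonneg_of_monotoneOn hv ha ht) (Finset.mem_filter.mpr ⟨hb, hbt⟩)
  rw [supermodularBound_eq_sub_sum]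
  exact sub_le_comm.mp savings_ge

theorem supermodularBound_le (hv : MonotoneOn v J) (ha : ∀ h ∈ J, 0 ≤ a h) (ht : t ∈ J)
    (hb : b ∈ J) (hab : 1 ≤ a b) : supermodularBound J v a t ≤ v b := by
  rcases le_or_gt t b with htb | hbt
  · exact (supermodularBound_le_self hv ha ht).trans (hv ht hb htb)
  · exact supermodularBound_le_of_lt hv ha ht hb hbt hab

theorem stmt_6_general (hv : MonotoneOn v J) (ha : ∀ h ∈ J, 0 ≤ a h) (hb : b ∈ J)
    (hab : 1 ≤ a b) (hlt : ∀ h ∈ J, h < b → a h = 0) :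
    (∑ h ∈ J with h < b, a h = 0) ∧
      IsLeast {η : R | ∀ t ∈ J, supermodularBound J v a t ≤ η} (v b) :=
  ⟨Finset.sum_eq_zero <| by simpa only [Finset.mem_filter, and_imp] using hlt,
    fun _ ht ↦ supermodularBound_le hv ha ht hb hab,
    fun _ hη ↦ (supermodularBound_eq_self_of_forall_lt_eq_zero hlt).ge.trans (hη b hb)⟩

end SupermodularBound

/-- Lemma 2 of the paper, abstract form: with `v` nondecreasing on
`{1, …, T}` and binary activation values `a` with at least one activation, letting `tb`
be the least activated index and `S t` the `t`-th supermodular right-hand side, the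
cumulative activation before `tb` vanishes and the least real `η` satisfying `η ≥ S t`
for all `t` equals `v tb`, the smallest sorted routing value whose variable is activated. -/
theorem stmt_6 (T : ℕ) (hT : 1 ≤ T) (v a : ℕ → ℝ)
    (hmono : ∀ h₁ ∈ Finset.Icc 1 T, ∀ h₂ ∈ Finset.Icc 1 T, h₁ ≤ h₂ → v h₁ ≤ v h₂)
    (ha01 : ∀ h ∈ Finset.Icc 1 T, a h = 0 ∨ a h = 1)
    (hsum : 1 ≤ ∑ h ∈ Finset.Icc 1 T, a h)
    (tb : ℕ) (htbmem : tb ∈ Finset.Icc 1 T) (htbact : a tb = 1)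
    (htbmin : ∀ t ∈ Finset.Icc 1 T, t < tb → a t ≠ 1)
    (S : ℕ → ℝ)
    (hS : ∀ t, S t = v t * (1 - ∑ h ∈ Finset.Icc 1 (t - 1), a h) +
      ∑ h ∈ Finset.Icc 1 (t - 1), v h * a h) :
    (∑ h ∈ Finset.Icc 1 (tb - 1), a h = 0) ∧
      IsLeast {η : ℝ | ∀ t ∈ Finset.Icc 1 T, S t ≤ η} (v tb) := by
  have nonneg : ∀ h ∈ Finset.Icc 1 T, 0 ≤ a h := fun h hh ↦
    (ha01 h hh).elim (fun h0 ↦ h0.ge) fun h1 ↦ zero_le_one.trans h1.ge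
  have zero_before : ∀ h ∈ Finset.Icc 1 T, h < tb → a h = 0 := fun h hh hlt ↦
    (ha01 h hh).resolve_right (htbmin h hh hlt)
  have filter_lt : ∀ t ∈ Finset.Icc 1 T, {h ∈ Finset.Icc 1 T | h < t} = Finset.Icc 1 (t - 1) :=
    fun t ht ↦ filter_lt_Icc_one (Nat.le_succ_of_le (Finset.mem_Icc.mp ht).2)
  have bound_eq : ∀ t ∈ Finset.Icc 1 T, supermodularBound (Finset.Icc 1 T) v a t = S t := by
    intro t ht
    rw [hS, supermodularBound, filter_lt t ht]
  simpa +contextual only [bound_eq, filter_lt tb htbmem] using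
    stmt_6_general hmono nonneg htbmem htbact.ge zero_before
end

section
/- Let (z, y, x) be any feasible solution of the LP relaxation of FZ-P, i.e. z : V → [0,1], y : E → [0,1], x : R × E → ℝ_{≥0} with Σ_{e∈E} x_re = 1 for all r, x_re ≤ y_e for all r, e, and Σ_{e∈δ(i)} x_re ≤ z_i for all r, i. Then there exists X : R × V × V → ℝ_{≥0} such that (z, X) is feasible for the LP relaxation of HLP_MA (i.e. Σ_{i,j∈V} X_rij = 1 for all r and X_rii + Σ_{j≠i}(X_rij + X_rji) ≤ z_i for all r, i) and Σ_r Σ_{i,j∈V} C_rij X_rij = Σ_r Σ_{e∈E} F̄_re x_re; in particular the LP relaxation optimal value of HLP_MA is at most that of FZ-P. Such an X is obtained by assigning, for each r and each edge e = {i,j}, the mass x_re to a pair among (i,j), (j,i), (i,i), (j,j) achieving the minimum F̄_re = min{C_rij, C_rji, C_rii, C_rjj}. -/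
open Finset

/-- Cost `C_rij` of routing commodity `r` through the ordered hub pair `(i, j)`. -/
def routeCost {V : Type*} {R : Type*} (c : V → V → ℝ) (α γ θ : ℝ)
    (o d : R → V) (w : R → ℝ) (r : R) (i j : V) : ℝ :=
  w r * (γ * c (o r) i + α * c i j + θ * c j (d r))

/-- Cost `H_ri` of routing commodity `r` through the single hub `i`. -/
def hubCost {V : Type*} {R : Type*} (c : V → V → ℝ) (γ θ : ℝ)
    (o d : R → V) (w : R → ℝ) (r : R) (i : V) : ℝ :=
  w r * (γ * c (o r) i + θ * c i (d r))

/-- Aggregated routing cost `F̄_re = min {C_rij, C_rji, H_ri, H_rj}` of commodity `r`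
via the unordered edge `e = {i, j}`. -/
def FbarCost {V : Type*} {R : Type*} (c : V → V → ℝ) (α γ θ : ℝ)
    (o d : R → V) (w : R → ℝ) (r : R) : Sym2 V → ℝ :=
  Sym2.lift ⟨fun i j =>
      min (min (routeCost c α γ θ o d w r i j) (routeCost c α γ θ o d w r j i))
        (min (hubCost c γ θ o d w r i) (hubCost c γ θ o d w r j)),
    fun i j => by
      dsimp only
      rw [min_comm (routeCost c α γ θ o d w r i j) (routeCost c α γ θ o d w r j i),
        min_comm (hubCost c γ θ o d w r i) (hubCost c γ θ o d w r j)]⟩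

/-- The edge set `E`: unordered pairs of distinct nodes. -/
noncomputable def edgeSet (V : Type*) [Fintype V] [DecidableEq V] : Finset (Sym2 V) :=
  Finset.univ.filter fun e => ¬ e.IsDiag

/-- Feasibility for the LP relaxation of formulation FZ-P. -/
noncomputable def FZPfeasible {V : Type*} [Fintype V] [DecidableEq V] {R : Type*} [Fintype R]
    (z : V → ℝ) (y : Sym2 V → ℝ) (x : R → Sym2 V → ℝ) : Prop :=
  (∀ i, z i ∈ Set.Icc (0 : ℝ) 1) ∧
  (∀ e ∈ edgeSet V, y e ∈ Set.Icc (0 : ℝ) 1) ∧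
  (∀ r, ∀ e ∈ edgeSet V, 0 ≤ x r e) ∧
  (∀ r, ∑ e ∈ edgeSet V, x r e = 1) ∧
  (∀ r, ∀ e ∈ edgeSet V, x r e ≤ y e) ∧
  (∀ r, ∀ i, ∑ e ∈ (edgeSet V).filter (fun e => i ∈ e), x r e ≤ z i)

/-- Feasibility for the LP relaxation of formulation HLP_MA. -/
def HLPfeasible {V : Type*} [Fintype V] [DecidableEq V] {R : Type*} [Fintype R]
    (z : V → ℝ) (X : R → V → V → ℝ) : Prop :=
  (∀ i, z i ∈ Set.Icc (0 : ℝ) 1) ∧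
  (∀ r, ∀ i j, 0 ≤ X r i j) ∧
  (∀ r, ∑ i, ∑ j, X r i j = 1) ∧
  (∀ r, ∀ i, X r i i + ∑ j ∈ Finset.univ.erase i, (X r i j + X r j i) ≤ z i)

/-!
By `c i i = 0`, `F̄_re` is the least of the route costs of the four ordered pairs formed from the
endpoints of `e`. Moving the mass `x_re` to a pair `p r e` attaining this minimum preserves total
mass and cost, and the mass on pairs through a node `i` comes only from edges incident to `i`, so
the capacity constraints survive. Thus every value of FZ-P is a value of HLP_MA. The infima compare
because HLP_MA has its feasible points in a compact box, so that its continuous objective is bounded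
below.
-/

section PushWeight

variable {ι κ M : Type*} [DecidableEq κ]

/-- The pushforward along `p` of the weights `x` on the finite set `s`: the mass at `k` is the total
weight of the fibre of `p` over `k`. It turns edge flows into flows on ordered hub pairs. -/
def pushWeight [AddCommMonoid M] (s : Finset ι) (p : ι → κ) (x : ι → M) (k : κ) : M :=
  ∑ e ∈ s with p e = k, x e

theorem pushWeight_nonneg [AddCommMonoid M] [PartialOrder M] [IsOrderedAddMonoid M]
    {s : Finset ι} {x : ι → M} (hx : ∀ e ∈ s, 0 ≤ x e) (p : ι → κ) (k : κ) :
    0 ≤ pushWeight s p x k :=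
  sum_nonneg fun e he => hx e (mem_of_mem_filter e he)

theorem sum_pushWeight [AddCommMonoid M] (s : Finset ι) (p : ι → κ) (x : ι → M) (t : Finset κ) :
    ∑ k ∈ t, pushWeight s p x k = ∑ e ∈ s with p e ∈ t, x e :=
  sum_fiberwise_eq_sum_filter s t p x

theorem sum_mul_pushWeight [Fintype κ] [NonUnitalNonAssocSemiring M]
    (s : Finset ι) (p : ι → κ) (x : ι → M) (g : κ → M) :
    ∑ k, g k * pushWeight s p x k = ∑ e ∈ s, g (p e) * x e := by
  rw [← sum_fiberwise s p]
  refine sum_congr rfl fun k _ => ?_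
  rw [pushWeight, mul_sum]
  exact sum_congr rfl fun e he => by rw [(mem_filter.mp he).2]

end PushWeight

theorem add_sum_erase_add_eq_sum_filter_mem {V M : Type*} [Fintype V] [DecidableEq V]
    [AddCommMonoid M] (g : V × V → M) (i : V) :
    g (i, i) + ∑ j ∈ univ.erase i, (g (i, j) + g (j, i)) =
      ∑ q : V × V with i ∈ s(q.1, q.2), g q := by
  have row_self : (∑ b, if i ∈ s(i, b) then g (i, b) else 0) =
      g (i, i) + ∑ b ∈ univ.erase i, g (i, b) := by
    simp only [Sym2.mem_mk_left, if_true, add_sum_erase _ (fun b => g (i, b)) (mem_univ i)]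
  have row_of_ne : ∀ a ∈ univ.erase i, (∑ b, if i ∈ s(a, b) then g (a, b) else 0) = g (a, i) := by
    intro a ha
    simp only [Sym2.mem_iff, (ne_of_mem_erase ha).symm, false_or, sum_ite_eq, mem_univ, if_true]
  rw [sum_filter, Fintype.sum_prod_type, ← add_sum_erase _ _ (mem_univ i), row_self,
    sum_congr rfl row_of_ne, sum_add_distrib, add_assoc]

section Routing

variable {V R : Type*} {c : V → V → ℝ}

theorem hubCost_eq_routeCost_self {i : V} (hi : c i i = 0) (α γ θ : ℝ) (o d : R → V)
    (w : R → ℝ) (r : R) :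
    hubCost c γ θ o d w r i = routeCost c α γ θ o d w r i i := by
  simp only [hubCost, routeCost, hi, mul_zero, add_zero]

theorem exists_routeCost_eq_FbarCost (hdiag : ∀ i, c i i = 0) (α γ θ : ℝ) (o d : R → V)
    (w : R → ℝ) (r : R) (e : Sym2 V) :
    ∃ q : V × V, (q.1 ∈ e ∧ q.2 ∈ e) ∧
      routeCost c α γ θ o d w r q.1 q.2 = FbarCost c α γ θ o d w r e := by
  induction e with | _ i j
  have hi := Sym2.mem_mk_left i j
  have hj := Sym2.mem_mk_right i j
  simp only [FbarCost, Sym2.lift_mk, hubCost_eq_routeCost_self (hdiag _) α]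
  rcases min_choice
      (min (routeCost c α γ θ o d w r i j) (routeCost c α γ θ o d w r j i))
      (min (routeCost c α γ θ o d w r i i) (routeCost c α γ θ o d w r j j)) with h | h <;> rw [h]
  · rcases min_choice (routeCost c α γ θ o d w r i j) (routeCost c α γ θ o d w r j i) with h | h
    exacts [⟨(i, j), ⟨hi, hj⟩, h.symm⟩, ⟨(j, i), ⟨hj, hi⟩, h.symm⟩]
  · rcases min_choice (routeCost c α γ θ o d w r i i) (routeCost c α γ θ o d w r j j) with h | h
    exacts [⟨(i, i), ⟨hi, hi⟩, h.symm⟩, ⟨(j, j), ⟨hj, hj⟩, h.symm⟩]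

variable [Fintype V] [DecidableEq V] [Fintype R]

theorem FZPfeasible.HLPfeasible_pushWeight {z : V → ℝ} {y : Sym2 V → ℝ} {x : R → Sym2 V → ℝ}
    (h : FZPfeasible z y x) {p : R → Sym2 V → V × V}
    (hp : ∀ r e, (p r e).1 ∈ e ∧ (p r e).2 ∈ e) :
    HLPfeasible z fun r i j => pushWeight (edgeSet V) (p r) (x r) (i, j) := by
  obtain ⟨hz, -, hx, hmass, -, hcap⟩ := h
  refine ⟨hz, fun r i j => pushWeight_nonneg (hx r) (p r) (i, j), fun r => ?_, fun r i => ?_⟩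
  · rw [← Fintype.sum_prod_type, sum_pushWeight]
    simpa only [mem_univ, filter_true] using hmass r
  · have incident : ∀ e, i ∈ s((p r e).1, (p r e).2) → i ∈ e := by
      intro e hi
      rcases Sym2.mem_iff.mp hi with rfl | rfl
      exacts [(hp r e).1, (hp r e).2]
    calc _ = ∑ e ∈ edgeSet V with i ∈ s((p r e).1, (p r e).2), x r e := by
          rw [add_sum_erase_add_eq_sum_filter_mem, sum_pushWeight]
          simp only [mem_filter, mem_univ, true_and]
      _ ≤ ∑ e ∈ edgeSet V with i ∈ e, x r e :=
          sum_le_sum_of_subset_of_nonneg (monotone_filter_right _ fun e _ => incident e)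
            fun e he _ => hx r e (mem_of_mem_filter e he)
      _ ≤ z i := hcap r i

theorem FZPfeasible.exists_HLPfeasible_cost_eq (hdiag : ∀ i, c i i = 0) (α γ θ : ℝ)
    (o d : R → V) (w : R → ℝ) {z : V → ℝ} {y : Sym2 V → ℝ} {x : R → Sym2 V → ℝ}
    (h : FZPfeasible z y x) :
    ∃ X : R → V → V → ℝ, HLPfeasible z X ∧
      (∑ r, ∑ i, ∑ j, routeCost c α γ θ o d w r i j * X r i j) =
        ∑ r, ∑ e ∈ edgeSet V, FbarCost c α γ θ o d w r e * x r e := by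
  choose p hp hcost using exists_routeCost_eq_FbarCost hdiag α γ θ o d w
  refine ⟨_, h.HLPfeasible_pushWeight hp, sum_congr rfl fun r _ => ?_⟩
  simp only [← hcost]
  rw [← sum_mul_pushWeight _ _ _ fun q : V × V => routeCost c α γ θ o d w r q.1 q.2,
    Fintype.sum_prod_type]

theorem HLPfeasible.le_one {z : V → ℝ} {X : R → V → V → ℝ} (h : HLPfeasible z X)
    (r : R) (i j : V) : X r i j ≤ 1 := by
  obtain ⟨-, hX, hmass, -⟩ := h
  calc X r i j ≤ ∑ j', X r i j' :=
        single_le_sum (fun j' _ => hX r i j') (mem_univ j)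
    _ ≤ ∑ i', ∑ j', X r i' j' :=
        single_le_sum (f := fun i' => ∑ j', X r i' j')
          (fun i' _ => sum_nonneg fun j' _ => hX r i' j') (mem_univ i)
    _ = 1 := hmass r

theorem bddBelow_image_HLPfeasible {g : (V → ℝ) × (R → V → V → ℝ) → ℝ} (hg : Continuous g) :
    BddBelow (g '' {q | HLPfeasible q.1 q.2}) := by
  refine (isCompact_Icc.bddBelow_image hg.continuousOn).mono
    (Set.image_mono (t := Set.Icc 0 1) fun q hq => ?_)
  exact ⟨⟨fun i => (hq.1 i).1, hq.2.1⟩, ⟨fun i => (hq.1 i).2, hq.le_one⟩⟩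

end Routing

theorem stmt_10_general {V : Type*} [Fintype V] [DecidableEq V] {R : Type*} [Fintype R]
    (c : V → V → ℝ) (hdiag : ∀ i, c i i = 0) (α γ θ : ℝ)
    (o d : R → V) (w : R → ℝ) (f : V → ℝ)
    (z : V → ℝ) (y : Sym2 V → ℝ) (x : R → Sym2 V → ℝ)
    (hfeas : FZPfeasible z y x) :
    (∃ X : R → V → V → ℝ, HLPfeasible z X ∧
        (∑ r, ∑ i, ∑ j, routeCost c α γ θ o d w r i j * X r i j) =
          ∑ r, ∑ e ∈ edgeSet V, FbarCost c α γ θ o d w r e * x r e) ∧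
      sInf {t : ℝ | ∃ z' : V → ℝ, ∃ X' : R → V → V → ℝ, HLPfeasible z' X' ∧
          t = (∑ i, f i * z' i) +
            ∑ r, ∑ i, ∑ j, routeCost c α γ θ o d w r i j * X' r i j} ≤
        sInf {t : ℝ | ∃ z' : V → ℝ, ∃ y' : Sym2 V → ℝ, ∃ x' : R → Sym2 V → ℝ,
          FZPfeasible z' y' x' ∧
          t = (∑ i, f i * z' i) +
            ∑ r, ∑ e ∈ edgeSet V, FbarCost c α γ θ o d w r e * x' r e} := by
  refine ⟨hfeas.exists_HLPfeasible_cost_eq hdiag α γ θ o d w,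
    csInf_le_csInf ?bounded ⟨_, z, y, x, hfeas, rfl⟩ ?attained⟩
  case bounded =>
    have objective_continuous : Continuous fun q : (V → ℝ) × (R → V → V → ℝ) =>
        (∑ i, f i * q.1 i) + ∑ r, ∑ i, ∑ j, routeCost c α γ θ o d w r i j * q.2 r i j := by
      fun_prop
    refine (bddBelow_image_HLPfeasible objective_continuous).mono ?_
    rintro _ ⟨z', X', hX', rfl⟩
    exact ⟨(z', X'), hX', rfl⟩
  case attained =>
    rintro _ ⟨z', y', x', hx', rfl⟩
    obtain ⟨X', hX', hcost⟩ := hx'.exists_HLPfeasible_cost_eq hdiag α γ θ o d w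
    exact ⟨z', X', hX', by rw [hcost]⟩

/-- from any feasible solution `(z, y, x)` of the LP relaxation of FZ-P one
can build `X ≥ 0` such that `(z, X)` is feasible for the LP relaxation of HLP_MA with the
same routing cost, `∑_r ∑_{i,j} C_rij X_rij = ∑_r ∑_e F̄_re x_re`; in particular the LP
relaxation optimal value of HLP_MA is at most that of FZ-P. -/
theorem stmt_10 {V : Type*} [Fintype V] [DecidableEq V]
    {R : Type*} [Fintype R] [Nonempty R]
    (c : V → V → ℝ) (hc0 : ∀ i j, 0 ≤ c i j) (hsym : ∀ i j, c i j = c j i)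
    (hdiag : ∀ i, c i i = 0) (htri : ∀ i j k, c i k ≤ c i j + c j k)
    (α γ θ : ℝ) (hα0 : 0 ≤ α) (hα1 : α ≤ 1) (hγ : 0 ≤ γ) (hθ : 0 ≤ θ)
    (o d : R → V) (w : R → ℝ) (hw : ∀ r, 0 ≤ w r)
    (f : V → ℝ) (hf : ∀ i, 0 ≤ f i)
    (z : V → ℝ) (y : Sym2 V → ℝ) (x : R → Sym2 V → ℝ)
    (hfeas : FZPfeasible z y x) :
    (∃ X : R → V → V → ℝ, HLPfeasible z X ∧
        (∑ r, ∑ i, ∑ j, routeCost c α γ θ o d w r i j * X r i j) =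
          ∑ r, ∑ e ∈ edgeSet V, FbarCost c α γ θ o d w r e * x r e) ∧
      sInf {t : ℝ | ∃ z' : V → ℝ, ∃ X' : R → V → V → ℝ, HLPfeasible z' X' ∧
          t = (∑ i, f i * z' i) +
            ∑ r, ∑ i, ∑ j, routeCost c α γ θ o d w r i j * X' r i j} ≤
        sInf {t : ℝ | ∃ z' : V → ℝ, ∃ y' : Sym2 V → ℝ, ∃ x' : R → Sym2 V → ℝ,
          FZPfeasible z' y' x' ∧
          t = (∑ i, f i * z' i) +
            ∑ r, ∑ e ∈ edgeSet V, FbarCost c α γ θ o d w r e * x' r e} := by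
  exact stmt_10_general c hdiag α γ θ o d w f z y x hfeas
end

section
/- Let (z, y, x) be any feasible solution of the LP relaxation of FZ-P, i.e. z : V → [0,1], y : E → [0,1], x : R × E → ℝ_{≥0} with Σ_{e∈E} x_re = 1 for all r, x_re ≤ y_e for all r, e, and Σ_{e∈δ(i)} x_re ≤ z_i for all r, i, where R is finite and nonempty. Define y'_e = max_{r∈R} x_re for each e ∈ E. Then (z, y', x) is feasible for the LP relaxation of CF-P: for every r and e = {i,j}, x_re ≤ y'_e, y'_e ≤ z_i and y'_e ≤ z_j, and Σ_{e∈E} x_re = 1; moreover the objective values of (z,y,x) in FZ-P and of (z,y',x) in CF-P coincide. Consequently the optimal value of the LP relaxation of CF-P is at most that of the LP relaxation of FZ-P, i.e. FZ-P is a reinforcement of CF-P. -/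
open Finset

/-- Feasibility for the LP relaxation of formulation CF-P of Contreras and Fernández. -/
noncomputable def CFPfeasible {V : Type*} [Fintype V] [DecidableEq V] {R : Type*} [Fintype R]
    (z : V → ℝ) (y : Sym2 V → ℝ) (x : R → Sym2 V → ℝ) : Prop :=
  (∀ i, z i ∈ Set.Icc (0 : ℝ) 1) ∧
  (∀ e ∈ edgeSet V, y e ∈ Set.Icc (0 : ℝ) 1) ∧
  (∀ r, ∀ e ∈ edgeSet V, 0 ≤ x r e) ∧
  (∀ r, ∑ e ∈ edgeSet V, x r e = 1) ∧
  (∀ r, ∀ e ∈ edgeSet V, x r e ≤ y e) ∧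
  (∀ e ∈ edgeSet V, ∀ i ∈ e, y e ≤ z i)

/-! Each `x r e` with `i ∈ e` is one term of the nonnegative sum over `δ(i)`, so it is at most
`z i`; hence so is the maximum over `r`, which is therefore an admissible `y` for CF-P. The
objective does not involve `y`, so every objective value of FZ-P is one of CF-P. The comparison of
real infima moreover needs CF-P bounded below, which holds because `z` and `x` take values in
`[0, 1]`. -/

theorem neg_sum_abs_le_sum_mul {ι K : Type*} [Ring K] [LinearOrder K] [IsOrderedRing K]
    (s : Finset ι) (a : ι → K) {t : ι → K} (ht : ∀ i ∈ s, |t i| ≤ 1) :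
    -∑ i ∈ s, |a i| ≤ ∑ i ∈ s, a i * t i := by
  apply neg_le_of_abs_le
  calc |∑ i ∈ s, a i * t i| ≤ ∑ i ∈ s, |a i * t i| := abs_sum_le_sum_abs _ _
    _ ≤ ∑ i ∈ s, |a i| := sum_le_sum fun i hi => by
      rw [abs_mul]
      exact mul_le_of_le_one_right (abs_nonneg _) (ht i hi)

section

variable {V R : Type*} [Fintype V] [DecidableEq V] [Fintype R]
  {z : V → ℝ} {y : Sym2 V → ℝ} {x : R → Sym2 V → ℝ}

/-- The objective `Σ_i f_i z_i + Σ_r Σ_e F_re x_re` shared by FZ-P and CF-P, for arbitrary routing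
costs `F`. -/
noncomputable def hubObjective (f : V → ℝ) (F : R → Sym2 V → ℝ) (z : V → ℝ)
    (x : R → Sym2 V → ℝ) : ℝ :=
  (∑ i, f i * z i) + ∑ r, ∑ e ∈ edgeSet V, F r e * x r e

/-- The set of objective values of the linear program with feasibility predicate `feasible`; its
infimum is the optimal value of the program (`sInf ∅ = 0` when the program is infeasible). -/
def objectiveValues (feasible : (V → ℝ) → (Sym2 V → ℝ) → (R → Sym2 V → ℝ) → Prop)
    (f : V → ℝ) (F : R → Sym2 V → ℝ) : Set ℝ :=
  {t | ∃ z y x, feasible z y x ∧ t = hubObjective f F z x}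

theorem FZPfeasible.flow_le_hub (h : FZPfeasible z y x) (r : R) {e : Sym2 V} (he : e ∈ edgeSet V)
    {i : V} (hi : i ∈ e) : x r e ≤ z i := by
  obtain ⟨-, -, hx, -, -, hxz⟩ := h
  calc x r e ≤ ∑ e' ∈ (edgeSet V).filter (fun e' => i ∈ e'), x r e' :=
        single_le_sum (fun e' he' => hx r e' (mem_of_mem_filter e' he'))
          (mem_filter.2 ⟨he, hi⟩)
    _ ≤ z i := hxz r i

theorem FZPfeasible.cfpFeasible_sup' [Nonempty R] (h : FZPfeasible z y x) :
    CFPfeasible z (fun e => univ.sup' univ_nonempty fun r => x r e) x := by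
  have flow_le_sup (r : R) (e : Sym2 V) : x r e ≤ univ.sup' univ_nonempty fun r => x r e :=
    le_sup' (fun r => x r e) (mem_univ r)
  have hub_bound (e) (he : e ∈ edgeSet V) (i) (hi : i ∈ e) :
      (univ.sup' univ_nonempty fun r => x r e) ≤ z i :=
    sup'_le _ _ fun r _ => h.flow_le_hub r he hi
  obtain ⟨hz, hy, hx, hsum, hxy, -⟩ := h
  refine ⟨hz, fun e he => ⟨?_, ?_⟩, hx, hsum, fun r e _ => flow_le_sup r e, hub_bound⟩
  · obtain ⟨r⟩ := ‹Nonempty R›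
    exact (hx r e he).trans (flow_le_sup r e)
  · exact sup'_le _ _ fun r _ => (hxy r e he).trans (hy e he).2

theorem objectiveValues_FZPfeasible_subset_CFPfeasible [Nonempty R] (f : V → ℝ)
    (F : R → Sym2 V → ℝ) :
    objectiveValues FZPfeasible f F ⊆ objectiveValues CFPfeasible f F := by
  rintro t ⟨z, y, x, h, ht⟩
  exact ⟨z, _, x, h.cfpFeasible_sup', ht⟩

theorem neg_sum_abs_le_hubObjective (f : V → ℝ) (F : R → Sym2 V → ℝ)
    (hz : ∀ i, |z i| ≤ 1) (hx : ∀ r, ∀ e ∈ edgeSet V, |x r e| ≤ 1) :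
    -∑ i, |f i| + ∑ r, -∑ e ∈ edgeSet V, |F r e| ≤ hubObjective f F z x :=
  add_le_add (neg_sum_abs_le_sum_mul univ f fun i _ => hz i)
    (sum_le_sum fun r _ => neg_sum_abs_le_sum_mul (edgeSet V) (F r) (hx r))

theorem bddBelow_objectiveValues_CFPfeasible (f : V → ℝ) (F : R → Sym2 V → ℝ) :
    BddBelow (objectiveValues CFPfeasible f F) := by
  refine ⟨-∑ i, |f i| + ∑ r, -∑ e ∈ edgeSet V, |F r e|, ?_⟩
  rintro t ⟨z, y, x, ⟨hz, hy, hx, -, hxy, -⟩, rfl⟩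
  apply neg_sum_abs_le_hubObjective
  · intro i
    rw [abs_of_nonneg (hz i).1]
    exact (hz i).2
  · intro r e he
    rw [abs_of_nonneg (hx r e he)]
    exact (hxy r e he).trans (hy e he).2

theorem stmt_13_general [Nonempty R] (f : V → ℝ) (F : R → Sym2 V → ℝ) (h : FZPfeasible z y x) :
    CFPfeasible z (fun e => univ.sup' univ_nonempty fun r => x r e) x ∧
      sInf (objectiveValues CFPfeasible f F) ≤ sInf (objectiveValues FZPfeasible f F) :=
  ⟨h.cfpFeasible_sup', csInf_le_csInf (bddBelow_objectiveValues_CFPfeasible f F)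
    ⟨_, z, y, x, h, rfl⟩ (objectiveValues_FZPfeasible_subset_CFPfeasible f F)⟩

end

/-- any feasible solution `(z, y, x)` of the LP relaxation of FZ-P yields,
with `y' e = max_{r ∈ R} x r e`, a feasible solution `(z, y', x)` of the LP relaxation of
CF-P with the same objective value; consequently the LP bound of CF-P is at most that of
FZ-P, i.e. FZ-P is a reinforcement of CF-P. -/
theorem stmt_13 {V : Type*} [Fintype V] [DecidableEq V]
    {R : Type*} [Fintype R] [Nonempty R]
    (c : V → V → ℝ) (α γ θ : ℝ)
    (o d : R → V) (w : R → ℝ)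
    (f : V → ℝ)
    (z : V → ℝ) (y : Sym2 V → ℝ) (x : R → Sym2 V → ℝ)
    (hfeas : FZPfeasible z y x)
    (y' : Sym2 V → ℝ)
    (hy' : ∀ e, y' e = Finset.univ.sup' Finset.univ_nonempty fun r : R => x r e) :
    CFPfeasible z y' x ∧
      ((∑ i, f i * z i) + ∑ r, ∑ e ∈ edgeSet V, FbarCost c α γ θ o d w r e * x r e) =
        ((∑ i, f i * z i) + ∑ r, ∑ e ∈ edgeSet V, FbarCost c α γ θ o d w r e * x r e) ∧
      sInf {t : ℝ | ∃ z' : V → ℝ, ∃ y'' : Sym2 V → ℝ, ∃ x' : R → Sym2 V → ℝ,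
          CFPfeasible z' y'' x' ∧
          t = (∑ i, f i * z' i) +
            ∑ r, ∑ e ∈ edgeSet V, FbarCost c α γ θ o d w r e * x' r e} ≤
        sInf {t : ℝ | ∃ z' : V → ℝ, ∃ y'' : Sym2 V → ℝ, ∃ x' : R → Sym2 V → ℝ,
          FZPfeasible z' y'' x' ∧
          t = (∑ i, f i * z' i) +
            ∑ r, ∑ e ∈ edgeSet V, FbarCost c α γ θ o d w r e * x' r e} := by
  obtain ⟨hcfp, hopt⟩ := stmt_13_general f (FbarCost c α γ θ o d w) hfeas
  exact ⟨funext hy' ▸ hcfp, rfl, hopt⟩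
end

section
/- Let r be a commodity with sorted routing values v̄_{r1} ≤ … ≤ v̄_{rT_r} (edge positions T^r_y carrying edges e_h, node positions T^r_z carrying nodes i_h), let ȳ ∈ [0,1]^E and z̄ ∈ [0,1]^V satisfy Σ_{h∈T^r_y} ȳ_{e_h} + Σ_{h∈T^r_z} z̄_{i_h} ≥ 1, and let t̄_r be the least t with Σ_{h∈T^r_y, h≤t} ȳ_{e_h} + Σ_{h∈T^r_z, h≤t} z̄_{i_h} ≥ 1. For each node i ∈ V^r fix an incident edge e(i,r) ∈ δ(i), and assume the edges e(i_h, r), h ∈ T^r_z, are pairwise distinct and distinct from every edge e_h, h ∈ T^r_y, and that F̄_{r,e(i,r)} = H_ri for every i ∈ V^r. Define x̄_r : E → ℝ_{≥0} by: x̄_{r,e_h} = ȳ_{e_h} for h ∈ T^r_y with h < t̄_r; x̄_{r,e(i_h,r)} = z̄_{i_h} for h ∈ T^r_z with h < t̄_r; the position t̄_r (its edge e_{t̄_r} if t̄_r ∈ T^r_y, or the edge e(i_{t̄_r}, r) if t̄_r ∈ T^r_z) receives the residual value 1 − Σ_{h < t̄_r} ȳ_{e_h} − Σ_{h < t̄_r}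 z̄_{i_h}; and x̄_{re} = 0 otherwise. Then Σ_{e∈E} x̄_{re} = 1 and the routing cost Σ_{e∈E} F̄_{re}·x̄_{re} equals S_{r t̄_r} = v̄_{r t̄_r}·(1 − Σ_{h < t̄_r} ȳ_{e_h} − Σ_{h < t̄_r} z̄_{i_h}) + Σ_{h∈T^r_y, h < t̄_r} v̄_{rh}·ȳ_{e_h} + Σ_{h∈T^r_z, h < t̄_r} v̄_{rh}·z̄_{i_h}. -/
open Finset

/-!
Pair the recovered routing with an arbitrary cost `g` on the edges: exchanging the sum over edges
with the sum over positions, each position before the threshold contributes its weight times the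
cost of its own edge, and the threshold edge contributes the residual times its cost. The cost
`g = 1` gives total mass one, because the residual is the complement of the preceding weights;
the cost `g = F̄` gives the supermodular right-hand side, because every edge in use costs the
routing value of its position.
-/

section FiberSum

variable {ι E R : Type*} [Fintype E] [DecidableEq E] [NonUnitalNonAssocSemiring R]

theorem sum_mul_sum_fiber (T : Finset ι) (k : ι → E) (g : E → R) (w : ι → R) :
    ∑ e, g e * ∑ h ∈ T with k h = e, w h = ∑ h ∈ T, g (k h) * w h := by
  rw [← sum_fiberwise T k]
  refine sum_congr rfl fun e _ => ?_
  rw [mul_sum]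
  exact sum_congr rfl fun h hh => by rw [(mem_filter.mp hh).2]

end FiberSum

section GreedyRouting

variable {ι E R : Type*} [LT ι] [DecidableLT ι] [Ring R]

/-- The residual `1 - ∑_{h < t} y_h - ∑_{h < t} z_h` that is left for the threshold position `t`
once the edge positions `Ty` and the node positions `Tz` before `t` have received their weights. -/
def greedyResidual (Ty Tz : Finset ι) (y z : ι → R) (t : ι) : R :=
  1 - (∑ h ∈ Ty with h < t, y h) - ∑ h ∈ Tz with h < t, z h

/-- The greedy routing vector `x̄`: the positions `h < t` in `Ty` and `Tz` put their weights `y h`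
and `z h` on the edges `ey h` and `ez h`, and the residual goes to the edge `e₀`. In the paper
`ey h = e_h` and `ez h = e(i_h, r)`. Weights put on the same edge are summed. -/
def greedyRouting [DecidableEq E] (Ty Tz : Finset ι) (ey ez : ι → E) (y z : ι → R) (t : ι)
    (e₀ : E) (e : E) : R :=
  (∑ h ∈ Ty with h < t ∧ ey h = e, y h) + (∑ h ∈ Tz with h < t ∧ ez h = e, z h) +
    if e = e₀ then greedyResidual Ty Tz y z t else 0

variable [Fintype E] [DecidableEq E] (Ty Tz : Finset ι) (ey ez : ι → E) (y z : ι → R) (t : ι)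
  (e₀ : E)

theorem sum_mul_greedyRouting (g : E → R) :
    ∑ e, g e * greedyRouting Ty Tz ey ez y z t e₀ e =
      g e₀ * greedyResidual Ty Tz y z t + (∑ h ∈ Ty with h < t, g (ey h) * y h) +
        ∑ h ∈ Tz with h < t, g (ez h) * z h := by
  simp only [greedyRouting, mul_add, sum_add_distrib, ← filter_filter, sum_mul_sum_fiber,
    mul_ite, mul_zero, sum_ite_eq', mem_univ, if_true]
  abel

theorem sum_greedyRouting : ∑ e, greedyRouting Ty Tz ey ez y z t e₀ e = 1 := by
  have pairing_one := sum_mul_greedyRouting Ty Tz ey ez y z t e₀ fun _ => 1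
  simp only [one_mul] at pairing_one
  rw [pairing_one, greedyResidual]
  abel

variable {Ty Tz ey ez t e₀} {F : E → R} {v : ι → R}

theorem sum_cost_mul_greedyRouting (hFy : ∀ h ∈ Ty, F (ey h) = v h)
    (hFz : ∀ h ∈ Tz, F (ez h) = v h) (hF₀ : F e₀ = v t) :
    ∑ e, F e * greedyRouting Ty Tz ey ez y z t e₀ e =
      v t * greedyResidual Ty Tz y z t + (∑ h ∈ Ty with h < t, v h * y h) +
        ∑ h ∈ Tz with h < t, v h * z h := by
  have cost_before {T : Finset ι} {k : ι → E} (w : ι → R) (hF : ∀ h ∈ T, F (k h) = v h) :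
      ∑ h ∈ T with h < t, F (k h) * w h = ∑ h ∈ T with h < t, v h * w h :=
    sum_congr rfl fun h hh => by rw [hF h (mem_of_mem_filter h hh)]
  rw [sum_mul_greedyRouting, hF₀, cost_before y hFy, cost_before z hFz]

theorem stmt_14_general (hFy : ∀ h ∈ Ty, F (ey h) = v h) (hFz : ∀ h ∈ Tz, F (ez h) = v h)
    (ht : t ∈ Ty ∨ t ∈ Tz) (he₀ : (t ∈ Ty → e₀ = ey t) ∧ (t ∈ Tz → e₀ = ez t)) :
    ∑ e, greedyRouting Ty Tz ey ez y z t e₀ e = 1 ∧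
      ∑ e, F e * greedyRouting Ty Tz ey ez y z t e₀ e =
        v t * greedyResidual Ty Tz y z t + (∑ h ∈ Ty with h < t, v h * y h) +
          ∑ h ∈ Tz with h < t, v h * z h := by
  have hF₀ : F e₀ = v t := by
    rcases ht with hTy | hTz
    · rw [he₀.1 hTy, hFy t hTy]
    · rw [he₀.2 hTz, hFz t hTz]
  exact ⟨sum_greedyRouting Ty Tz ey ez y z t e₀, sum_cost_mul_greedyRouting y z hFy hFz hF₀⟩

end GreedyRouting

/-- Lemma 3 of the paper: for a commodity with sorted routing values
`v 1 ≤ … ≤ v Tr` occupying edge positions `Ty` (position `h` carrying edge `er h`, with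
`F̄` value `Fb (er h) = v h`) and node positions `Tz` (position `h` carrying node
`ir h ∈ Vr` with single-hub cost `H (ir h) = v h`), activation levels
`ybar, zbar ∈ [0, 1]` whose cumulative value reaches `1` for the first time at position
`tbar`, and a fixed non-traversed incident edge `eir i ∈ δ(i)` for each `i ∈ Vr` with
`F̄` value `Fb (eir i) = H i`, the greedily recovered routing vector `xbar` satisfies
`∑ e, xbar e = 1` and its routing cost `∑ e, Fb e * xbar e` equals the binding
supermodular right-hand side `S tbar`. -/
theorem stmt_14 {V : Type*} [Fintype V] [DecidableEq V]
    (Tr : ℕ) (hTr : 1 ≤ Tr) (v : ℕ → ℝ)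
    (hmono : ∀ h₁ ∈ Finset.Icc 1 Tr, ∀ h₂ ∈ Finset.Icc 1 Tr, h₁ ≤ h₂ → v h₁ ≤ v h₂)
    (Ty Tz : Finset ℕ) (hdisj : Disjoint Ty Tz) (hpart : Ty ∪ Tz = Finset.Icc 1 Tr)
    (er : ℕ → Sym2 V) (ir : ℕ → V)
    (Fb : Sym2 V → ℝ) (H : V → ℝ) (Vr : Finset V)
    (hFbTy : ∀ h ∈ Ty, Fb (er h) = v h)
    (hHTz : ∀ h ∈ Tz, H (ir h) = v h)
    (hirVr : ∀ h ∈ Tz, ir h ∈ Vr)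
    (eir : V → Sym2 V) (hinc : ∀ i ∈ Vr, i ∈ eir i)
    (hFbH : ∀ i ∈ Vr, Fb (eir i) = H i)
    (herinj : Set.InjOn er (Ty : Set ℕ))
    (hdist1 : ∀ h₁ ∈ Tz, ∀ h₂ ∈ Tz, h₁ ≠ h₂ → eir (ir h₁) ≠ eir (ir h₂))
    (hdist2 : ∀ h₁ ∈ Tz, ∀ h₂ ∈ Ty, eir (ir h₁) ≠ er h₂)
    (ybar : Sym2 V → ℝ) (zbar : V → ℝ)
    (hy : ∀ e, ybar e ∈ Set.Icc (0 : ℝ) 1) (hz : ∀ i, zbar i ∈ Set.Icc (0 : ℝ) 1)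
    (hcov : 1 ≤ (∑ h ∈ Ty, ybar (er h)) + ∑ h ∈ Tz, zbar (ir h))
    (tbar : ℕ) (htbmem : tbar ∈ Finset.Icc 1 Tr)
    (htbge : 1 ≤ (∑ h ∈ Ty.filter (· ≤ tbar), ybar (er h)) +
      ∑ h ∈ Tz.filter (· ≤ tbar), zbar (ir h))
    (htbmin : ∀ t < tbar, (∑ h ∈ Ty.filter (· ≤ t), ybar (er h)) +
      (∑ h ∈ Tz.filter (· ≤ t), zbar (ir h)) < 1)
    (etbar : Sym2 V)
    (hetbar : (tbar ∈ Ty → etbar = er tbar) ∧ (tbar ∈ Tz → etbar = eir (ir tbar)))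
    (xbar : Sym2 V → ℝ)
    (hxbar : ∀ e, xbar e =
      (∑ h ∈ Ty.filter (fun h => h < tbar ∧ er h = e), ybar (er h)) +
      (∑ h ∈ Tz.filter (fun h => h < tbar ∧ eir (ir h) = e), zbar (ir h)) +
      (if e = etbar then
        1 - (∑ h ∈ Ty.filter (· < tbar), ybar (er h)) -
          ∑ h ∈ Tz.filter (· < tbar), zbar (ir h)
      else 0)) :
    (∑ e : Sym2 V, xbar e) = 1 ∧
      (∑ e : Sym2 V, Fb e * xbar e) =
        v tbar * (1 - (∑ h ∈ Ty.filter (· < tbar), ybar (er h)) -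
            ∑ h ∈ Tz.filter (· < tbar), zbar (ir h)) +
          (∑ h ∈ Ty.filter (· < tbar), v h * ybar (er h)) +
          ∑ h ∈ Tz.filter (· < tbar), v h * zbar (ir h) := by
  obtain rfl : xbar = greedyRouting Ty Tz er (eir ∘ ir) (ybar ∘ er) (zbar ∘ ir) tbar etbar :=
    funext hxbar
  exact stmt_14_general (ybar ∘ er) (zbar ∘ ir) hFbTy
    (fun h hh => (hFbH _ (hirVr h hh)).trans (hHTz h hh)) (mem_union.mp (hpart ▸ htbmem)) hetbar
end

section
/- Let r be a commodity with sorted routing values v̄_{r1} ≤ … ≤ v̄_{rT_r} (edge positions T^r_y carrying edges e_h, node positions T^r_z carrying nodes i_h), and let y* : E → {0,1} and z* : V → {0,1} be binary vectors such that the set { t : (t ∈ T^r_y and y*_{e_t} = 1) or (t ∈ T^r_z and z*_{i_t} = 1) } is nonempty, with least element t*_r. Then the least real number η^r satisfying, for all t ∈ {1,…,T_r}, η^r ≥ v̄_{rt} + Σ_{h∈T^r_y, h<t}(v̄_{rh} − v̄_{rt})·y*_{e_h} + Σ_{h∈T^r_z, h<t}(v̄_{rh} − v̄_{rt})·z*_{i_h},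 equals v̄_{r t*_r}. Hence, at binary optimal values (z*, y*) of FZ-S, the optimal routing cost of each commodity r is v̄_{r t*_r}, and an optimal routing for FZ-P routes commodity r entirely through the option (edge e_{t*_r} or single hub i_{t*_r}) occupying position t*_r. -/
open Finset

/-! The constraint at position `t` reads `v t` plus a nonpositive correction for each open option
before `t`. A fully open option at `s` caps every constraint by `v s`: directly by monotonicity if
`t ≤ s`, and because its correction `v s - v t` alone lowers `v t` to `v s` if `s < t`. At the first
open position all corrections vanish, so there the cap is attained. -/

namespace SupermodularRouting

variable {ι R : Type*} [LinearOrder ι] [Ring R]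

/-- The correction that a family of routing options (edges or single hubs) adds to the supermodular
constraint at position `t`: the family occupies the positions `S`, `v` gives the routing values, and
`w h` is the activation level of the option at position `h`. -/
def correction (S : Finset ι) (v w : ι → R) (t : ι) : R :=
  ∑ h ∈ S with h < t, (v h - v t) * w h

theorem correction_eq_zero {S : Finset ι} {v w : ι → R} {t : ι}
    (hw : ∀ h ∈ S, h < t → w h = 0) : correction S v w t = 0 :=
  sum_eq_zero fun h hh => by
    obtain ⟨hS, hlt⟩ := mem_filter.1 hh
    rw [hw h hS hlt, mul_zero]

variable [PartialOrder R] [IsOrderedRing R] {P : Set ι} {S : Finset ι} {v w : ι → R} {s t : ι}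

theorem correction_summand_nonpos (hv : MonotoneOn v P) (hS : ↑S ⊆ P) (hw : ∀ h ∈ S, 0 ≤ w h)
    (ht : t ∈ P) : ∀ h ∈ S.filter (· < t), (v h - v t) * w h ≤ 0 := fun h hh => by
  obtain ⟨hhS, hlt⟩ := mem_filter.1 hh
  exact mul_nonpos_of_nonpos_of_nonneg (sub_nonpos.2 (hv (hS hhS) ht hlt.le)) (hw h hhS)

theorem correction_nonpos (hv : MonotoneOn v P) (hS : ↑S ⊆ P) (hw : ∀ h ∈ S, 0 ≤ w h)
    (ht : t ∈ P) : correction S v w t ≤ 0 :=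
  sum_nonpos (correction_summand_nonpos hv hS hw ht)

theorem correction_le_sub (hv : MonotoneOn v P) (hS : ↑S ⊆ P) (hw : ∀ h ∈ S, 0 ≤ w h)
    (ht : t ∈ P) (hs : s ∈ S) (hws : 1 ≤ w s) (hst : s < t) :
    correction S v w t ≤ v s - v t := by
  have hterms := correction_summand_nonpos hv hS hw ht
  calc correction S v w t
      ≤ ∑ h ∈ {s}, (v h - v t) * w h :=
        sum_le_sum_of_subset_of_nonpos' (singleton_subset_iff.2 (mem_filter.2 ⟨hs, hst⟩))
          fun h hh _ => hterms h hh
    _ = (v s - v t) * w s := sum_singleton _ _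
    _ ≤ v s - v t := mul_le_of_one_le_right (sub_nonpos.2 (hv (hS hs) ht hst.le)) hws

theorem add_correction_le (hv : MonotoneOn v P) (hS : ↑S ⊆ P) (hw : ∀ h ∈ S, 0 ≤ w h)
    (ht : t ∈ P) (hs : s ∈ S) (hws : 1 ≤ w s) : v t + correction S v w t ≤ v s := by
  rcases le_or_gt t s with hts | hst
  · exact (add_le_of_nonpos_right (correction_nonpos hv hS hw ht)).trans (hv ht (hS hs) hts)
  · exact le_sub_iff_add_le'.1 (correction_le_sub hv hS hw ht hs hws hst)

end SupermodularRouting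

open SupermodularRouting

theorem stmt_15_general {ι R : Type*} [LinearOrder ι] [Ring R] [PartialOrder R] [IsOrderedRing R]
    {P : Set ι} {v : ι → R} (hv : MonotoneOn v P)
    {Ty Tz : Finset ι} (hTy : ↑Ty ⊆ P) (hTz : ↑Tz ⊆ P)
    {y z : ι → R} (hy : ∀ h ∈ Ty, 0 ≤ y h) (hz : ∀ h ∈ Tz, 0 ≤ z h)
    {tstar : ι} (hts : (tstar ∈ Ty ∧ 1 ≤ y tstar) ∨ (tstar ∈ Tz ∧ 1 ≤ z tstar))
    (hymin : ∀ h ∈ Ty, h < tstar → y h = 0) (hzmin : ∀ h ∈ Tz, h < tstar → z h = 0) :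
    IsLeast {η : R | ∀ t ∈ P, v t + correction Ty v y t + correction Tz v z t ≤ η} (v tstar) := by
  have htP : tstar ∈ P := hts.elim (fun h => hTy h.1) (fun h => hTz h.1)
  refine ⟨fun t ht => ?_, fun η hη => ?_⟩
  · rcases hts with ⟨hmem, hopen⟩ | ⟨hmem, hopen⟩
    · exact (add_le_of_nonpos_right (correction_nonpos hv hTz hz ht)).trans
        (add_correction_le hv hTy hy ht hmem hopen)
    · rw [add_right_comm]
      exact (add_le_of_nonpos_right (correction_nonpos hv hTy hy ht)).trans
        (add_correction_le hv hTz hz ht hmem hopen)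
  · simpa only [correction_eq_zero hymin, correction_eq_zero hzmin, add_zero] using hη tstar htP

/-- Lemma 2 of the paper: for a commodity with sorted routing values
`v 1 ≤ … ≤ v Tr` occupying edge positions `Ty` (position `t` carrying edge `er t`) and
node positions `Tz` (position `t` carrying node `ir t`), and binary activation vectors
`ys` (edges) and `zs` (nodes) with at least one activated position, the least real `η`
satisfying all supermodular constraints of FZ-S equals `v tstar`, where `tstar` is the
least activated position. -/
theorem stmt_15 {V : Type*} [Fintype V] [DecidableEq V]
    (Tr : ℕ) (hTr : 1 ≤ Tr) (v : ℕ → ℝ)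
    (hmono : ∀ h₁ ∈ Finset.Icc 1 Tr, ∀ h₂ ∈ Finset.Icc 1 Tr, h₁ ≤ h₂ → v h₁ ≤ v h₂)
    (Ty Tz : Finset ℕ) (hdisj : Disjoint Ty Tz) (hpart : Ty ∪ Tz = Finset.Icc 1 Tr)
    (er : ℕ → Sym2 V) (ir : ℕ → V)
    (ys : Sym2 V → ℝ) (zs : V → ℝ)
    (hy01 : ∀ e, ys e = 0 ∨ ys e = 1) (hz01 : ∀ i, zs i = 0 ∨ zs i = 1)
    (tstar : ℕ)
    (hts : (tstar ∈ Ty ∧ ys (er tstar) = 1) ∨ (tstar ∈ Tz ∧ zs (ir tstar) = 1))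
    (htsmin : ∀ t, t < tstar →
      ¬((t ∈ Ty ∧ ys (er t) = 1) ∨ (t ∈ Tz ∧ zs (ir t) = 1))) :
    IsLeast {η : ℝ | ∀ t ∈ Finset.Icc 1 Tr,
        v t + (∑ h ∈ Ty.filter (· < t), (v h - v t) * ys (er h)) +
          (∑ h ∈ Tz.filter (· < t), (v h - v t) * zs (ir h)) ≤ η}
      (v tstar) := by
  have nonneg {x : ℝ} (hx : x = 0 ∨ x = 1) : 0 ≤ x := hx.elim Eq.ge fun h1 => h1 ▸ zero_le_one
  have hTy : Ty ⊆ Icc 1 Tr := hpart ▸ subset_union_left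
  have hTz : Tz ⊆ Icc 1 Tr := hpart ▸ subset_union_right
  exact stmt_15_general (y := ys ∘ er) (z := zs ∘ ir)
    (fun a ha b hb => hmono a ha b hb) (coe_subset.2 hTy) (coe_subset.2 hTz)
    (fun h _ => nonneg (hy01 (er h))) (fun h _ => nonneg (hz01 (ir h)))
    (hts.imp (And.imp_right Eq.ge) (And.imp_right Eq.ge))
    (fun h hh hlt => (hy01 (er h)).resolve_right fun h1 => htsmin h hlt (.inl ⟨hh, h1⟩))
    (fun h hh hlt => (hz01 (ir h)).resolve_right fun h1 => htsmin h hlt (.inr ⟨hh, h1⟩))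
end

section
/- Let (z, y, x) be an integer feasible solution of formulation CF-P, i.e. z : V → {0,1}, y : E → {0,1}, x : R × E → {0,1} with Σ_{e∈E} x_re = 1 for every commodity r, x_re ≤ y_e for all r, e, and y_e ≤ z_i, y_e ≤ z_j for every edge e = {i,j}. Then for every commodity r and every node i ∈ V, Σ_{e∈δ(i)} x_re ≤ z_i; that is, the reinforcing constraints of formulation FZ-P are valid inequalities for the integer solutions of CF-P. -/
open Finset

theorem sum_le_of_subset_of_eq_zero_or_sum_le {ι M : Type*} [AddCommMonoid M] [Preorder M]
    [IsOrderedAddMonoid M] {s t : Finset ι} {f : ι → M} {c : M} (hts : t ⊆ s)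
    (hf : ∀ a ∈ s, a ∉ t → 0 ≤ f a) (hfc : ∀ a ∈ t, f a ≤ c)
    (hc : c = 0 ∨ ∑ a ∈ s, f a ≤ c) : ∑ a ∈ t, f a ≤ c := by
  rcases hc with rfl | hsum
  · exact sum_nonpos hfc
  · exact (sum_le_sum_of_subset_of_nonneg hts hf).trans hsum

theorem stmt_16_general {V R M : Type*} [DecidableEq V] [AddCommMonoid M] [One M] [Preorder M]
    [IsOrderedAddMonoid M] (E : Finset (Sym2 V))
    (z : V → M) (y : Sym2 V → M) (x : R → Sym2 V → M)
    (hz : ∀ i, z i = 0 ∨ 1 ≤ z i)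
    (hx : ∀ r, ∀ e ∈ E, 0 ≤ x r e)
    (hroute : ∀ r, ∑ e ∈ E, x r e ≤ 1)
    (hxy : ∀ r, ∀ e ∈ E, x r e ≤ y e)
    (hyz : ∀ e ∈ E, ∀ i ∈ e, y e ≤ z i) (r : R) (i : V) :
    ∑ e ∈ E with i ∈ e, x r e ≤ z i := by
  have hxz : ∀ e ∈ E.filter (i ∈ ·), x r e ≤ z i := fun e he ↦
    have ⟨heE, hie⟩ := mem_filter.mp he
    (hxy r e heE).trans (hyz e heE i hie)
  exact sum_le_of_subset_of_eq_zero_or_sum_le (filter_subset _ _) (fun e he _ ↦ hx r e he) hxz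
    ((hz i).imp_right (hroute r).trans)

/-- for any integer feasible solution `(z, y, x)` of formulation CF-P
(binary variables, each commodity routed via exactly one activated interhub edge, and both
endpoints of every activated edge open as hubs), the reinforcing constraints of FZ-P hold:
for every commodity `r` and node `i`, `∑_{e ∈ δ(i)} x r e ≤ z i`. -/
theorem stmt_16 {V : Type*} [Fintype V] [DecidableEq V]
    {R : Type*} [Fintype R]
    (z : V → ℝ) (y : Sym2 V → ℝ) (x : R → Sym2 V → ℝ)
    (hz01 : ∀ i, z i = 0 ∨ z i = 1)
    (hy01 : ∀ e ∈ edgeSet V, y e = 0 ∨ y e = 1)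
    (hx01 : ∀ r : R, ∀ e ∈ edgeSet V, x r e = 0 ∨ x r e = 1)
    (hroute : ∀ r : R, ∑ e ∈ edgeSet V, x r e = 1)
    (hxy : ∀ r : R, ∀ e ∈ edgeSet V, x r e ≤ y e)
    (hyz : ∀ e ∈ edgeSet V, ∀ i ∈ e, y e ≤ z i) :
    ∀ (r : R) (i : V), ∑ e ∈ (edgeSet V).filter (fun e => i ∈ e), x r e ≤ z i := by
  have hx_nonneg : ∀ r, ∀ e ∈ edgeSet V, 0 ≤ x r e := fun r e he ↦ by
    rcases hx01 r e he with h | h <;> simp [h]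
  exact stmt_16_general (edgeSet V) z y x (fun i ↦ (hz01 i).imp_right Eq.ge) hx_nonneg
    (fun r ↦ (hroute r).le) hxy hyz
end
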